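/- Let n ≥ 2 be an even integer. Then for every connected simple graph G on n vertices with domination number n/2, ρ(G) ≥ ρ(P_{n/2} ∘ K_1), with equality if and only if G is isomorphic to P_{n/2} ∘ K_1. -/

import Mathlib

open SimpleGraph

/-- Adjacency matrix of a simple graph over ℝ. -/
noncomputable def adjMat {V : Type*} (G : SimpleGraph V) : Matrix V V ℝ :=
  Matrix.of fun i j => @ite ℝ (G.Adj i j) (Classical.propDecidable _) 1 0

/-- Spectral radius: the largest eigenvalue (supremum of the real spectrum)
of the adjacency matrix. -/
noncomputable def specRad {V : Type*} [Fintype V] [DecidableEq V]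
    (G : SimpleGraph V) : ℝ :=
  sSup (spectrum ℝ (adjMat G))

/-- `D` is a dominating set of `G`. -/
def IsDomSet {V : Type*} (G : SimpleGraph V) (D : Finset V) : Prop :=
  ∀ v ∉ D, ∃ u ∈ D, G.Adj u v

/-- The domination number of `G`. -/
noncomputable def domNum {V : Type*} [Fintype V] (G : SimpleGraph V) : ℕ :=
  sInf {k | ∃ D : Finset V, IsDomSet G D ∧ D.card = k}

/-- The corona `H ∘ K₁`: each vertex `v` of `H` (copied as `Sum.inl v`) gets a new
pendant neighbour `Sum.inr v`. -/
def corona {V : Type*} (H : SimpleGraph V) : SimpleGraph (V ⊕ V) :=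
  SimpleGraph.fromRel (fun x y =>
    (∃ u v, x = Sum.inl u ∧ y = Sum.inl v ∧ H.Adj u v) ∨
    (∃ v, x = Sum.inl v ∧ y = Sum.inr v))

/-!
Let `G` be connected on `2m` vertices with domination number `m`.  A spanning tree `T` of `G` has
spectral radius at most that of `G`, with equality only if `T = G`, and domination number `m`.
By the theorem of Bollobás and Cockayne, `T` has a minimum dominating set each of whose vertices
has an external private neighbour.  Counting vertices, these pairs form a perfect matching, and no
other edge joins the dominating set to its complement.  An edge on both sides at the same pair
would give a smaller dominating set or a 4-cycle, so each pair contains a leaf and `T = H ∘ K₁`.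

Eliminating the pendent entries from the eigenvector equation of `H ∘ K₁` gives
`ρ(H) = ρ(H ∘ K₁) - 1 / ρ(H ∘ K₁)`, which reduces the problem to the theorem of Collatz and
Sinogowitz: among connected graphs on `m` vertices the path has the least spectral radius, namely
`2 cos t` with `t = π / (m + 1)`.  For this, let `x > 0` satisfy `A x ≤ (2 cos t) x` and let the
neighbours `c` of a vertex `v` be the roots of disjoint trees with `k_c` vertices which together
cover all vertices but `v`.  Induction over these trees gives `x_c ≥ f(k_c t) x_v` for
`f(a) = sin a / sin (a + t)`, as on a path.  As `f` is subadditive and `f(π - 2t) = 2 cos t`,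
summing over `c` yields `(A x)_v ≥ (2 cos t) x_v`, strictly if `v` has three neighbours.
-/

open scoped Matrix

section Perron

variable {V : Type*} [Fintype V] {A : Matrix V V ℝ}

theorem dotProduct_mulVec_le_abs (h0 : ∀ i j, 0 ≤ A i j) (z : V → ℝ) :
    z ⬝ᵥ A *ᵥ z ≤ |z| ⬝ᵥ A *ᵥ |z| := by
  simp only [dotProduct, Matrix.mulVec, Finset.mul_sum, Pi.abs_apply]
  refine Finset.sum_le_sum fun i _ => Finset.sum_le_sum fun j _ => ?_
  calc z i * (A i j * z j) ≤ |z i * (A i j * z j)| := le_abs_self _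
    _ = |z i| * (A i j * |z j|) := by rw [abs_mul, abs_mul, abs_of_nonneg (h0 i j)]

variable [DecidableEq V]

theorem posSemidef_algebraMap_sSup_spectrum_sub (hA : A.IsHermitian) :
    (algebraMap ℝ (Matrix V V ℝ) (sSup (spectrum ℝ A)) - A).PosSemidef := by
  rw [Matrix.posSemidef_iff_isHermitian_and_spectrum_nonneg]
  refine ⟨.sub (by simp [Matrix.IsHermitian, Matrix.algebraMap_eq_diagonal]) hA, ?_⟩
  rw [← spectrum.singleton_sub_eq]
  rintro _ ⟨_, rfl, μ, hμ, rfl⟩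
  have hle : μ ≤ sSup (spectrum ℝ A) := le_csSup A.finite_real_spectrum.bddAbove hμ
  simpa using hle

theorem exists_mulVec_eq_sSup_spectrum_smul [Nonempty V] (hA : A.IsHermitian) :
    ∃ z ≠ 0, A *ᵥ z = sSup (spectrum ℝ A) • z := by
  have hmem : sSup (spectrum ℝ A) ∈ spectrum ℝ A := by
    refine Set.Nonempty.csSup_mem ?_ A.finite_real_spectrum
    rw [hA.spectrum_real_eq_range_eigenvalues]
    exact Set.range_nonempty _
  rw [hA.spectrum_real_eq_range_eigenvalues] at hmem
  obtain ⟨i, hi⟩ := hmem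
  refine ⟨hA.eigenvectorBasis i, ?_, ?_⟩
  · have := hA.eigenvectorBasis.toBasis.ne_zero i
    simpa using this
  · rw [hA.mulVec_eigenvectorBasis, hi, hA.spectrum_real_eq_range_eigenvalues]

theorem exists_nonneg_mulVec_eq_sSup_spectrum_smul [Nonempty V] (hA : A.IsHermitian)
    (h0 : ∀ i j, 0 ≤ A i j) :
    ∃ x, 0 < x ∧ A *ᵥ x = sSup (spectrum ℝ A) • x := by
  obtain ⟨z, hz0, hz⟩ := exists_mulVec_eq_sSup_spectrum_smul hA
  have hpsd := posSemidef_algebraMap_sSup_spectrum_sub hA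
  set ρ := sSup (spectrum ℝ A)
  have hsub (x : V → ℝ) : (algebraMap ℝ (Matrix V V ℝ) ρ - A) *ᵥ x = ρ • x - A *ᵥ x := by
    rw [Matrix.sub_mulVec, Algebra.algebraMap_eq_smul_one, Matrix.smul_mulVec, Matrix.one_mulVec]
  -- `|z|` minimises the positive semidefinite form of `ρ - A`, so it lies in its kernel.
  have hform : star |z| ⬝ᵥ (algebraMap ℝ (Matrix V V ℝ) ρ - A) *ᵥ |z| = 0 := by
    refine le_antisymm ?_ (hpsd.dotProduct_mulVec_nonneg |z|)
    have habs : |z| ⬝ᵥ |z| = z ⬝ᵥ z := by simp [dotProduct]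
    have hle := dotProduct_mulVec_le_abs h0 z
    rw [hz, dotProduct_smul, ← habs] at hle
    simpa [hsub, dotProduct_sub, dotProduct_smul] using hle
  rw [hpsd.dotProduct_mulVec_zero_iff, hsub, sub_eq_zero] at hform
  exact ⟨|z|, (abs_nonneg z).lt_of_ne' fun h => hz0 (by simpa [funext_iff] using h), hform.symm⟩

end Perron

section SpectralRadius

variable {V W : Type*} {G G' : SimpleGraph V}

theorem adjMat_eq_adjMatrix (G : SimpleGraph V) [DecidableRel G.Adj] :
    adjMat G = G.adjMatrix ℝ := by
  ext v w
  simp [adjMat, adjMatrix_apply]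

theorem isHermitian_adjMat (G : SimpleGraph V) : (adjMat G).IsHermitian := by
  classical
  rw [adjMat_eq_adjMatrix, Matrix.IsHermitian, Matrix.conjTranspose_eq_transpose_of_trivial,
    transpose_adjMatrix]

variable [Fintype V] [Fintype W] {x : V → ℝ} {μ : ℝ}

theorem adjMat_mulVec_apply [DecidableRel G.Adj] (x : V → ℝ) (v : V) :
    (adjMat G *ᵥ x) v = ∑ w ∈ G.neighborFinset v, x w := by
  rw [adjMat_eq_adjMatrix, adjMatrix_mulVec_apply]

theorem adjMat_mulVec_mono (hle : G ≤ G') (hx : 0 ≤ x) : adjMat G *ᵥ x ≤ adjMat G' *ᵥ x := by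
  classical
  intro v
  rw [adjMat_mulVec_apply, adjMat_mulVec_apply]
  exact Finset.sum_le_sum_of_subset_of_nonneg (fun w hw => by simpa using hle (by simpa using hw))
    fun w _ _ => hx w

theorem eq_of_le_of_adjMat_mulVec_eq (hle : G ≤ G') (hx : ∀ v, 0 < x v)
    (h : adjMat G *ᵥ x = adjMat G' *ᵥ x) : G = G' := by
  classical
  refine le_antisymm hle fun v w hvw => by_contra fun hnot => ?_
  refine (Finset.sum_lt_sum_of_subset (s := G.neighborFinset v) (t := G'.neighborFinset v) (f := x)
    (fun u hu => ?_) (i := w) ?_ ?_ (hx w) fun u _ _ => (hx u).le).ne ?_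
  · simpa using hle (by simpa using hu)
  · simpa using hvw
  · simpa using hnot
  · rw [← adjMat_mulVec_apply, ← adjMat_mulVec_apply, h]

theorem dotProduct_pos_of_forall_pos {y : V → ℝ} (hy : ∀ v, 0 < y v) (hx : 0 < x) :
    0 < y ⬝ᵥ x := by
  obtain ⟨hx0, v, hv⟩ := Pi.lt_def.mp hx
  exact Finset.sum_pos' (fun w _ => mul_nonneg (hy w).le (hx0 w))
    ⟨v, Finset.mem_univ v, mul_pos (hy v) hv⟩

variable [DecidableEq V] [DecidableEq W]

theorem exists_pos_adjMat_mulVec_eq_specRad_smul (hG : G.Connected) :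
    ∃ x : V → ℝ, (∀ v, 0 < x v) ∧ adjMat G *ᵥ x = specRad G • x := by
  classical
  have := hG.nonempty
  obtain ⟨x, hx, hAx⟩ := exists_nonneg_mulVec_eq_sSup_spectrum_smul (isHermitian_adjMat G)
    fun v w => by rw [adjMat, Matrix.of_apply]; split_ifs <;> simp
  refine ⟨x, fun v => (hx.le v).lt_of_ne' fun hv => hx.ne' ?_, hAx⟩
  have hstep {a b : V} (hab : G.Adj a b) (ha : x a = 0) : x b = 0 := by
    have hsum : ∑ w ∈ G.neighborFinset a, x w = 0 := by
      rw [← adjMat_mulVec_apply, hAx, Pi.smul_apply, ha, smul_zero]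
    exact (Finset.sum_eq_zero_iff_of_nonneg fun w _ => hx.le w).mp hsum b (by simpa using hab)
  ext w
  obtain ⟨p⟩ := hG.preconnected v w
  induction p with
  | nil => exact hv
  | cons h _ ih => exact ih (hstep h hv)

theorem exists_pos_dotProduct_adjMat_mulVec (hG : G.Connected) :
    ∃ y : V → ℝ, (∀ v, 0 < y v) ∧ ∀ x, y ⬝ᵥ adjMat G *ᵥ x = specRad G * (y ⬝ᵥ x) := by
  obtain ⟨y, hy, hAy⟩ := exists_pos_adjMat_mulVec_eq_specRad_smul hG
  refine ⟨y, hy, fun x => ?_⟩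
  have hsymm : (adjMat G)ᵀ = adjMat G := by
    simpa only [Matrix.conjTranspose_eq_transpose_of_trivial] using (isHermitian_adjMat G).eq
  rw [Matrix.dotProduct_mulVec, ← Matrix.mulVec_transpose, hsymm, hAy, smul_dotProduct, smul_eq_mul]

theorem le_specRad_of_smul_le_adjMat_mulVec (hG : G.Connected) (hx : 0 < x)
    (h : μ • x ≤ adjMat G *ᵥ x) : μ ≤ specRad G := by
  obtain ⟨y, hy, hyA⟩ := exists_pos_dotProduct_adjMat_mulVec hG
  refine le_of_mul_le_mul_right ?_ (dotProduct_pos_of_forall_pos hy hx)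
  calc μ * (y ⬝ᵥ x) = y ⬝ᵥ μ • x := by rw [dotProduct_smul, smul_eq_mul]
    _ ≤ y ⬝ᵥ adjMat G *ᵥ x := dotProduct_le_dotProduct_of_nonneg_left h fun v => (hy v).le
    _ = specRad G * (y ⬝ᵥ x) := hyA x

theorem adjMat_mulVec_eq_of_specRad_smul_le (hG : G.Connected)
    (h : specRad G • x ≤ adjMat G *ᵥ x) : adjMat G *ᵥ x = specRad G • x := by
  obtain ⟨y, hy, hyA⟩ := exists_pos_dotProduct_adjMat_mulVec hG
  by_contra hne
  have hpos := dotProduct_pos_of_forall_pos hy (sub_pos.mpr (lt_of_le_of_ne' h hne))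
  simp [dotProduct_sub, hyA] at hpos

theorem specRad_eq_of_adjMat_mulVec_eq (hG : G.Connected) (hx : 0 < x)
    (h : adjMat G *ᵥ x = μ • x) : specRad G = μ := by
  obtain ⟨y, hy, hyA⟩ := exists_pos_dotProduct_adjMat_mulVec hG
  refine mul_right_cancel₀ (dotProduct_pos_of_forall_pos hy hx).ne' ?_
  rw [← hyA, h, dotProduct_smul, smul_eq_mul]

theorem specRad_congr {H : SimpleGraph W} (e : G ≃g H) : specRad G = specRad H := by
  classical
  have hreindex : Matrix.reindexAlgEquiv ℝ ℝ e.toEquiv (adjMat G) = adjMat H := by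
    rw [Matrix.coe_reindexAlgEquiv, adjMat_eq_adjMatrix, adjMat_eq_adjMatrix]
    exact e.reindex_adjMatrix ℝ
  rw [specRad, specRad, ← hreindex, AlgEquiv.spectrum_eq]

theorem specRad_mono (hG : G.Connected) (hle : G ≤ G') : specRad G ≤ specRad G' := by
  obtain ⟨x, hx, hAx⟩ := exists_pos_adjMat_mulVec_eq_specRad_smul hG
  have := hG.nonempty
  refine le_specRad_of_smul_le_adjMat_mulVec (hG.mono hle) (lt_of_strongLT hx) ?_
  rw [← hAx]
  exact adjMat_mulVec_mono hle fun v => (hx v).le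

theorem eq_of_le_of_specRad_eq (hG : G.Connected) (hle : G ≤ G') (h : specRad G = specRad G') :
    G = G' := by
  obtain ⟨x, hx, hAx⟩ := exists_pos_adjMat_mulVec_eq_specRad_smul hG
  refine eq_of_le_of_adjMat_mulVec_eq hle hx ?_
  have hsub := adjMat_mulVec_mono hle fun v => (hx v).le
  rw [hAx, h] at hsub ⊢
  exact (adjMat_mulVec_eq_of_specRad_smul_le (hG.mono hle) hsub).symm

end SpectralRadius

section Corona

variable {V W : Type*} {H : SimpleGraph V}

@[simp]
theorem corona_adj_inl_inl {u v : V} : (corona H).Adj (.inl u) (.inl v) ↔ H.Adj u v := by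
  simp only [corona, fromRel_adj, Sum.inl.injEq, reduceCtorEq, and_false, exists_false, or_false,
    ne_eq]
  grind [Adj.ne, Adj.symm]

@[simp]
theorem corona_adj_inl_inr {u v : V} : (corona H).Adj (.inl u) (.inr v) ↔ u = v := by
  simp [corona, fromRel_adj, eq_comm]

@[simp]
theorem corona_adj_inr_inl {u v : V} : (corona H).Adj (.inr u) (.inl v) ↔ u = v := by
  rw [adj_comm, corona_adj_inl_inr, eq_comm]

@[simp]
theorem not_corona_adj_inr_inr {u v : V} : ¬(corona H).Adj (.inr u) (.inr v) := by
  simp [corona, fromRel_adj]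

/-- The isomorphism of coronas induced by an isomorphism of the underlying graphs, acting in the
same way on the core vertices and on the pendent ones. -/
def coronaCongr {H' : SimpleGraph W} (e : H ≃g H') : corona H ≃g corona H' where
  toEquiv := Equiv.sumCongr e.toEquiv e.toEquiv
  map_rel_iff' := by rintro (u | u) (v | v) <;> simp [e.map_adj_iff]

theorem corona_connected_iff : (corona H).Connected ↔ H.Connected := by
  constructor <;> intro hH
  · have hreach {p q : V ⊕ V} (w : (corona H).Walk p q) :
        H.Reachable (p.elim id id) (q.elim id id) := by
      induction w with
      | nil => rfl
      | @cons p q _ h _ ih =>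
        refine .trans ?_ ih
        rcases p with u | u <;> rcases q with v | v <;> simp at h
        · exact h.reachable
        all_goals simp [h]
    have hne : Nonempty V := hH.nonempty.elim fun p => ⟨p.elim id id⟩
    exact ⟨fun u v => (hH.preconnected (.inl u) (.inl v)).elim hreach⟩
  · have := hH.nonempty
    have hinl (u v : V) : (corona H).Reachable (.inl u) (.inl v) :=
      (hH.preconnected u v).map (⟨Sum.inl, corona_adj_inl_inl.mpr⟩ : H →g corona H)
    have hroot (p : V ⊕ V) : (corona H).Reachable p (.inl (p.elim id id)) := by
      rcases p with u | u
      · rfl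
      · exact (corona_adj_inr_inl.mpr rfl).reachable
    exact ⟨fun p q => ((hroot p).trans (hinl _ _)).trans (hroot q).symm⟩

theorem nonempty_iso_corona {G : SimpleGraph V} {c l : W → V}
    (hcl : Function.Bijective (Sum.elim c l)) (hl : ∀ w v, G.Adj (l w) v ↔ v = c w) :
    Nonempty (G ≃g corona (G.comap c)) := by
  have hc : c.Injective := hcl.injective.comp Sum.inl_injective
  have hlc (w w' : W) : l w ≠ c w' := fun h =>
    Sum.inr_ne_inl (hcl.injective (a₁ := .inr w) (a₂ := .inl w') h)
  let e : corona (G.comap c) ≃g G :=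
    ⟨Equiv.ofBijective _ hcl, by
      rintro (u | u) (v | v)
      · simp
      · simp [adj_comm G (c u), hl, hc.eq_iff]
      · simp [hl, hc.eq_iff, eq_comm]
      · simp [hl, hlc]⟩
  exact ⟨e.symm⟩

variable [Fintype V] [Fintype W]

theorem adjMat_corona_mulVec_inl (z : V ⊕ V → ℝ) (v : V) :
    (adjMat (corona H) *ᵥ z) (.inl v) = (adjMat H *ᵥ (z ∘ Sum.inl)) v + z (.inr v) := by
  classical
  simp [Matrix.mulVec, dotProduct, adjMat]

theorem adjMat_corona_mulVec_inr (z : V ⊕ V → ℝ) (v : V) :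
    (adjMat (corona H) *ᵥ z) (.inr v) = z (.inl v) := by
  classical
  simp [Matrix.mulVec, dotProduct, adjMat]

variable [DecidableEq V] [DecidableEq W]

theorem specRad_corona_pos (hH : H.Connected) : 0 < specRad (corona H) := by
  obtain ⟨z, hz, hAz⟩ :=
    exists_pos_adjMat_mulVec_eq_specRad_smul (corona_connected_iff.mpr hH)
  obtain ⟨v⟩ := hH.nonempty
  have hpendant := congrFun hAz (.inr v)
  rw [adjMat_corona_mulVec_inr, Pi.smul_apply, smul_eq_mul] at hpendant
  exact pos_of_mul_pos_left (hpendant ▸ hz (.inl v)) (hz (.inr v)).le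

theorem specRad_eq_specRad_corona_sub_inv (hH : H.Connected) :
    specRad H = specRad (corona H) - (specRad (corona H))⁻¹ := by
  obtain ⟨z, hz, hAz⟩ :=
    exists_pos_adjMat_mulVec_eq_specRad_smul (corona_connected_iff.mpr hH)
  have hpos := specRad_corona_pos hH
  have := hH.nonempty
  refine specRad_eq_of_adjMat_mulVec_eq (x := z ∘ Sum.inl) hH
    (lt_of_strongLT fun v => hz (.inl v)) ?_
  ext v
  have hcore := congrFun hAz (.inl v)
  have hpendant := congrFun hAz (.inr v)
  rw [adjMat_corona_mulVec_inl, Pi.smul_apply, smul_eq_mul] at hcore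
  rw [adjMat_corona_mulVec_inr, Pi.smul_apply, smul_eq_mul] at hpendant
  rw [Pi.smul_apply, smul_eq_mul, Function.comp_apply, sub_mul, eq_sub_iff_add_eq, ← hcore,
    hpendant, inv_mul_cancel_left₀ hpos.ne']

theorem specRad_corona_le_iff {H' : SimpleGraph W} (hH : H.Connected) (hH' : H'.Connected) :
    specRad (corona H) ≤ specRad (corona H') ↔ specRad H ≤ specRad H' := by
  have hmono : StrictMonoOn (fun r : ℝ => r - r⁻¹) (Set.Ioi 0) := fun r hr s _ hrs =>
    sub_lt_sub hrs (inv_strictAnti₀ hr hrs)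
  rw [specRad_eq_specRad_corona_sub_inv hH, specRad_eq_specRad_corona_sub_inv hH']
  exact (hmono.le_iff_le (specRad_corona_pos hH) (specRad_corona_pos hH')).symm

theorem specRad_corona_inj {H' : SimpleGraph W} (hH : H.Connected) (hH' : H'.Connected) :
    specRad (corona H) = specRad (corona H') ↔ specRad H = specRad H' := by
  rw [le_antisymm_iff, specRad_corona_le_iff hH hH', specRad_corona_le_iff hH' hH,
    ← le_antisymm_iff]

end Corona

section SineRatio

open Real

variable {t a b : ℝ}

/-- Ratio of the sines of an angle and of its successor, `t` being the step.  Along a path whose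
entries are `sin t, sin (2 * t), …`, it is the quotient of two consecutive entries. -/
noncomputable def sinRatio (t a : ℝ) : ℝ := sin a / sin (a + t)

theorem sin_add_mul_sin_add_sub (x y z : ℝ) :
    sin (x + y) * sin (y + z) - sin y * sin (x + y + z) = sin x * sin z := by
  simp only [sin_add, cos_add]
  linear_combination (sin x * sin z) * sin_sq_add_cos_sq y

theorem sinRatio_zero (t : ℝ) : sinRatio t 0 = 0 := by simp [sinRatio]

theorem sinRatio_pi_sub_two_mul (ht : sin t ≠ 0) : sinRatio t (π - 2 * t) = 2 * cos t := by
  rw [sinRatio, show π - 2 * t + t = π - t by ring, sin_pi_sub, sin_pi_sub, sin_two_mul]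
  field_simp

theorem sinRatio_mul_two_mul_cos_sub (ha : sin a ≠ 0) (hat : sin (a + t) ≠ 0) :
    sinRatio t a * (2 * cos t - sinRatio t (a - t)) = 1 := by
  have hsum : sin (a + t) + sin (a - t) = 2 * cos t * sin a := by
    rw [sin_add, sin_sub]
    ring
  rw [sinRatio, sinRatio, sub_add_cancel]
  field_simp
  linarith

theorem sinRatio_pos (ha : 0 < a) (ht : 0 < t) (hat : a + t < π) : 0 < sinRatio t a :=
  div_pos (sin_pos_of_pos_of_lt_pi ha (by linarith)) (sin_pos_of_pos_of_lt_pi (by linarith) hat)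

theorem sinRatio_add (ha : sin (a + t) ≠ 0) (hb : sin (b + t) ≠ 0) (hab : sin (a + b + t) ≠ 0) :
    sinRatio t (a + b) = sinRatio t a + sinRatio t b -
      sin a * sin b * sin (a + b + 2 * t) / (sin (a + t) * sin (b + t) * sin (a + b + t)) := by
  have h₁ := sin_add_mul_sin_add_sub a b t
  have h₂ := sin_add_mul_sin_add_sub t b (a + t)
  rw [show t + b = b + t by ring, show b + (a + t) = a + b + t by ring,
    show b + t + (a + t) = a + b + 2 * t by ring] at h₂
  rw [sinRatio, sinRatio, sinRatio]
  generalize sin (a + b + 2 * t) = s at h₂ ⊢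
  field_simp
  linear_combination sin (a + t) * h₁ - sin a * h₂

theorem sinRatio_add_lt (ha : 0 < a) (hb : 0 < b) (ht : 0 < t) (hab : a + b + 2 * t < π) :
    sinRatio t (a + b) < sinRatio t a + sinRatio t b := by
  have hpos {y : ℝ} (hy : 0 < y) (hyπ : y < π) : 0 < sin y := sin_pos_of_pos_of_lt_pi hy hyπ
  have hat : 0 < sin (a + t) := hpos (by linarith) (by linarith)
  have hbt : 0 < sin (b + t) := hpos (by linarith) (by linarith)
  have habt : 0 < sin (a + b + t) := hpos (by linarith) (by linarith)
  rw [sinRatio_add hat.ne' hbt.ne' habt.ne']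
  have := hpos ha (by linarith)
  have := hpos hb (by linarith)
  have := hpos (y := a + b + 2 * t) (by linarith) hab
  exact sub_lt_self _ (by positivity)

theorem sinRatio_add_le (ha : 0 ≤ a) (hb : 0 ≤ b) (ht : 0 < t) (hab : a + b + 2 * t ≤ π) :
    sinRatio t (a + b) ≤ sinRatio t a + sinRatio t b := by
  have hnn {y : ℝ} (hy : 0 ≤ y) (hyπ : y ≤ π) : 0 ≤ sin y := sin_nonneg_of_nonneg_of_le_pi hy hyπ
  have hpos {y : ℝ} (hy : 0 < y) (hyπ : y < π) : 0 < sin y := sin_pos_of_pos_of_lt_pi hy hyπ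
  have hat : 0 < sin (a + t) := hpos (by linarith) (by linarith)
  have hbt : 0 < sin (b + t) := hpos (by linarith) (by linarith)
  have habt : 0 < sin (a + b + t) := hpos (by linarith) (by linarith)
  rw [sinRatio_add hat.ne' hbt.ne' habt.ne']
  have := hnn ha (by linarith)
  have := hnn hb (by linarith)
  have := hnn (y := a + b + 2 * t) (by linarith) hab
  exact sub_le_self _ (by positivity)

theorem sinRatio_sum_le {ι : Type*} {s : Finset ι} {f : ι → ℝ} (hf : ∀ i ∈ s, 0 ≤ f i) (ht : 0 < t)
    (hs : ∑ i ∈ s, f i + 2 * t ≤ π) : sinRatio t (∑ i ∈ s, f i) ≤ ∑ i ∈ s, sinRatio t (f i) := by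
  induction s using Finset.cons_induction with
  | empty => simp [sinRatio_zero]
  | cons i s hi ih =>
    rw [Finset.forall_mem_cons] at hf
    rw [Finset.sum_cons] at hs ⊢
    have hsum := Finset.sum_nonneg hf.2
    rw [Finset.sum_cons]
    calc sinRatio t (f i + ∑ j ∈ s, f j) ≤ sinRatio t (f i) + sinRatio t (∑ j ∈ s, f j) :=
          sinRatio_add_le hf.1 hsum ht hs
      _ ≤ sinRatio t (f i) + ∑ j ∈ s, sinRatio t (f j) := by
          gcongr
          exact ih hf.2 (by linarith)

theorem sinRatio_sum_lt {ι : Type*} {s : Finset ι} {f : ι → ℝ} (hf : ∀ i ∈ s, 0 < f i) (ht : 0 < t)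
    (hs : ∑ i ∈ s, f i + 2 * t ≤ π) (hcard : 2 < s.card) :
    sinRatio t (∑ i ∈ s, f i) < ∑ i ∈ s, sinRatio t (f i) := by
  classical
  obtain ⟨i, hi, j, hj, k, hk, hij, hik, hjk⟩ := Finset.two_lt_card.mp hcard
  have hj' : j ∈ s.erase i := Finset.mem_erase.mpr ⟨hij.symm, hj⟩
  have hk' : k ∈ (s.erase i).erase j := by grind
  set u := (s.erase i).erase j
  have hu {l : ι} (hl : l ∈ u) : l ∈ s := Finset.mem_of_mem_erase (Finset.mem_of_mem_erase hl)
  have hsplit (g : ι → ℝ) : ∑ l ∈ s, g l = g i + g j + ∑ l ∈ u, g l := by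
    rw [← Finset.add_sum_erase s g hi, ← Finset.add_sum_erase _ g hj', add_assoc]
  have hu0 : 0 < ∑ l ∈ u, f l := Finset.sum_pos (fun l hl => hf l (hu hl)) ⟨k, hk'⟩
  have hfi := hf i hi
  have hfj := hf j hj
  rw [hsplit] at hs
  rw [hsplit, hsplit]
  calc sinRatio t (f i + f j + ∑ l ∈ u, f l)
      ≤ sinRatio t (f i + f j) + sinRatio t (∑ l ∈ u, f l) :=
        sinRatio_add_le (by linarith) hu0.le ht hs
    _ < sinRatio t (f i) + sinRatio t (f j) + sinRatio t (∑ l ∈ u, f l) := by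
        gcongr
        exact sinRatio_add_lt hfi hfj ht (by linarith)
    _ ≤ sinRatio t (f i) + sinRatio t (f j) + ∑ l ∈ u, sinRatio t (f l) := by
        gcongr
        exact sinRatio_sum_le (fun l hl => (hf l (hu hl)).le) ht (by linarith)

theorem two_mul_cos_eq_sinRatio_sum {ι : Type*} {s : Finset ι} {f : ι → ℝ}
    (hf : ∀ i ∈ s, 0 ≤ f i) (ht : 0 < t) (hs : ∑ i ∈ s, f i + 2 * t = π) :
    2 * cos t = sinRatio t (∑ i ∈ s, f i) := by
  have := Finset.sum_nonneg hf
  rw [eq_sub_of_add_eq hs, sinRatio_pi_sub_two_mul (sin_pos_of_pos_of_lt_pi ht (by linarith)).ne']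

end SineRatio

section Path

variable {V : Type*} {G : SimpleGraph V} {r : V}

theorem exists_adj_dist_eq_of_dist_eq_add_one {v : V} {k : ℕ} (h : G.dist r v = k + 1) :
    ∃ u, G.Adj u v ∧ G.dist r u = k := by
  obtain ⟨p, hp⟩ := exists_walk_of_dist_ne_zero (h ▸ k.succ_ne_zero : G.dist r v ≠ 0)
  obtain ⟨q, rfl⟩ : ∃ q : G.Walk v r, p = q.reverse := ⟨p.reverse, p.reverse_reverse.symm⟩
  cases q with
  | nil => simp at h
  | @cons _ u _ hvu q =>
    have hle := dist_le q.reverse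
    have hstep := hvu.symm.diff_dist_adj (u := r)
    simp only [Walk.length_reverse, Walk.length_cons] at hp hle
    exact ⟨u, hvu.symm, by lia⟩

variable [Fintype V]

theorem pathGraph_card_connected [Nonempty V] : (pathGraph (Fintype.card V)).Connected := by
  rw [← Nat.succ_pred_eq_of_pos Fintype.card_pos]
  exact pathGraph_connected _

theorem nonempty_iso_pathGraph_of_dist_injective (hG : G.Connected)
    (hinj : Function.Injective (G.dist r)) :
    Nonempty (G ≃g pathGraph (Fintype.card V)) := by
  have hlt (v : V) : G.dist r v < Fintype.card V := by
    obtain ⟨p, hp, hlen⟩ := hG.exists_path_of_dist r v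
    exact hlen ▸ hp.length_lt
  have hbij : Function.Bijective fun v => (⟨G.dist r v, hlt v⟩ : Fin (Fintype.card V)) :=
    (Fintype.bijective_iff_injective_and_card _).mpr
      ⟨fun u v huv => hinj (congrArg Fin.val huv), by simp⟩
  have hadj {u v : V} (h : G.dist r u + 1 = G.dist r v) : G.Adj u v := by
    obtain ⟨p, hpv, hp⟩ := exists_adj_dist_eq_of_dist_eq_add_one h.symm
    exact hinj hp ▸ hpv
  refine ⟨⟨Equiv.ofBijective _ hbij, fun {u v} => ?_⟩⟩
  simp only [pathGraph_adj, Equiv.ofBijective_apply]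
  refine ⟨fun h => h.elim hadj fun h => (hadj h).symm, fun h => ?_⟩
  have hne : G.dist r u ≠ G.dist r v := hinj.ne h.ne
  have := h.diff_dist_adj (u := r)
  lia

variable [DecidableRel G.Adj]

theorem dist_injective_of_degree_le_two (hG : G.Connected) (hdeg : ∀ v, G.degree v ≤ 2)
    (hr : G.degree r ≤ 1) : Function.Injective (G.dist r) := by
  intro u v huv
  induction hk : G.dist r u generalizing u v with
  | zero =>
    have hru := hG.dist_eq_zero_iff.mp hk
    have hrv := hG.dist_eq_zero_iff.mp (huv ▸ hk)
    exact hru.symm.trans hrv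
  | succ k ih =>
    obtain ⟨p, hpu, hp⟩ := exists_adj_dist_eq_of_dist_eq_add_one hk
    obtain ⟨q, hqv, hq⟩ := exists_adj_dist_eq_of_dist_eq_add_one (huv ▸ hk)
    obtain rfl : p = q := ih (hp.trans hq.symm) hp
    rw [← mem_neighborFinset] at hpu hqv
    rcases k with _ | k
    · obtain rfl := hG.dist_eq_zero_iff.mp hp
      exact Finset.card_le_one.mp hr u hpu v hqv
    · obtain ⟨s, hsp, hs⟩ := exists_adj_dist_eq_of_dist_eq_add_one hp
      by_contra hne
      refine (Finset.two_lt_card.mpr ⟨s, ?_, u, hpu, v, hqv, ?_, ?_, hne⟩).not_ge (hdeg p)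
      · simpa using hsp.symm
      all_goals rintro rfl; lia

theorem exists_degree_le_one_of_specRad_lt_two [DecidableEq V] (hG : G.Connected)
    (h : specRad G < 2) : ∃ v, G.degree v ≤ 1 := by
  by_contra! hdeg
  have := hG.nonempty
  refine h.not_ge (le_specRad_of_smul_le_adjMat_mulVec (x := fun _ => 1) hG
    (lt_of_strongLT fun _ => one_pos) fun v => ?_)
  rw [adjMat_mulVec_apply]
  simpa using Nat.succ_le_of_lt (hdeg v)

theorem adjMat_pathGraph_mulVec {m : ℕ} {f : ℕ → ℝ} (h0 : f 0 = 0) (hm : f (m + 1) = 0)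
    (i : Fin m) :
    (adjMat (pathGraph m) *ᵥ fun j => f (j + 1)) i = f i + f (i + 2) := by
  classical
  have hsum : ∀ j : Fin m, adjMat (pathGraph m) i j * f (j + 1) =
      (if (j : ℕ) + 1 = i then f (j + 1) else 0) + if (j : ℕ) = i + 1 then f (j + 1) else 0 := by
    intro j
    simp only [adjMat, Matrix.of_apply, pathGraph_adj]
    grind
  rw [Matrix.mulVec, dotProduct, Finset.sum_congr rfl fun j _ => hsum j, Finset.sum_add_distrib,
    Fin.sum_univ_eq_sum_range (fun j => if j + 1 = (i : ℕ) then f (j + 1) else 0),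
    Fin.sum_univ_eq_sum_range (fun j => if j = (i : ℕ) + 1 then f (j + 1) else 0)]
  congr 1
  · rcases hi : (i : ℕ) with _ | k
    · simp [h0]
    · simp [show k < m by lia]
  · rcases (Nat.succ_le_of_lt i.isLt).lt_or_eq with hi | hi
    · simp [hi]
    · simp [show (i : ℕ) + 2 = m + 1 by lia, hm]

theorem specRad_pathGraph {m : ℕ} (hm : 0 < m) :
    specRad (pathGraph m) = 2 * Real.cos (Real.pi / (m + 1)) := by
  obtain ⟨k, rfl⟩ := Nat.exists_eq_add_one.mpr hm
  set t := Real.pi / ((k + 1 : ℕ) + 1) with ht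
  have hend : ((k + 1 + 1 : ℕ) : ℝ) * t = Real.pi := by
    rw [ht]
    push_cast
    field_simp
  have hpos : ∀ j : Fin (k + 1), 0 < Real.sin ((j + 1 : ℕ) * t) := fun j =>
    Real.sin_pos_of_pos_of_lt_pi (by positivity) <| by
      rw [← hend]
      gcongr
      lia
  refine specRad_eq_of_adjMat_mulVec_eq (pathGraph_connected k) (lt_of_strongLT hpos) ?_
  ext i
  rw [adjMat_pathGraph_mulVec (f := fun j => Real.sin (j * t)) (by simp)
    (by rw [hend, Real.sin_pi]), Pi.smul_apply, smul_eq_mul, mul_right_comm,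
    Real.two_mul_sin_mul_cos]
  push_cast
  congr 2 <;> ring

end Path

section RootedSubtree

variable {V : Type*} [DecidableEq V] {G : SimpleGraph V} {S : Finset V} {v : V}

/-- `IsRootedSubtree G S v` says that `S` is the vertex set of a subtree of `G` rooted at `v`,
built from single vertices by hanging one rooted tree below the root of another. -/
inductive IsRootedSubtree (G : SimpleGraph V) : Finset V → V → Prop
  | single (v : V) : IsRootedSubtree G {v} v
  | hang {A B : Finset V} {v c : V} (hA : IsRootedSubtree G A v) (hB : IsRootedSubtree G B c)
      (hAB : Disjoint A B) (hvc : G.Adj v c) : IsRootedSubtree G (A ∪ B) v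

namespace IsRootedSubtree

theorem root_mem (h : IsRootedSubtree G S v) : v ∈ S := by
  induction h with
  | single v => exact Finset.mem_singleton_self v
  | hang _ _ _ _ ihA _ => exact Finset.mem_union_left _ ihA

theorem insert (h : IsRootedSubtree G S v) {a b : V} (ha : a ∈ S) (hb : b ∉ S) (hab : G.Adj a b) :
    IsRootedSubtree G (insert b S) v := by
  induction h with
  | single v =>
    obtain rfl := Finset.mem_singleton.mp ha
    rw [Finset.insert_eq, Finset.union_comm]
    exact .hang (.single a) (.single b) (Finset.disjoint_singleton.mpr hab.ne) hab
  | hang hA hB hAB hvc ihA ihB =>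
    rw [Finset.mem_union, not_or] at hb
    rcases Finset.mem_union.mp ha with ha | ha
    · rw [← Finset.insert_union]
      exact .hang (ihA ha hb.1) hB (Finset.disjoint_insert_left.mpr ⟨hb.2, hAB⟩) hvc
    · rw [← Finset.union_insert]
      exact .hang hA (ihB ha hb.2) (Finset.disjoint_insert_right.mpr ⟨hb.1, hAB⟩) hvc

theorem eq_singleton (h : IsRootedSubtree G S v) (hS : ∀ w ∈ S, ¬G.Adj v w) : S = {v} := by
  cases h with
  | single => rfl
  | hang _ hB _ hvc => exact absurd hvc (hS _ (Finset.mem_union_right _ hB.root_mem))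

end IsRootedSubtree

/-- A spanning-forest fragment of `G` with root set `R`: `B r` is the vertex set of the tree rooted
at `r ∈ R`, and distinct trees are disjoint.  The values of `B` outside `R` are irrelevant. -/
structure IsRootedForest (G : SimpleGraph V) (R : Finset V) (B : V → Finset V) : Prop where
  isRootedSubtree : ∀ r ∈ R, IsRootedSubtree G (B r) r
  pairwiseDisjoint : (R : Set V).PairwiseDisjoint B

namespace IsRootedForest

variable {R : Finset V} {B : V → Finset V}

theorem subset_biUnion (h : IsRootedForest G R B) : R ⊆ R.biUnion B := fun r hr =>
  Finset.mem_biUnion.mpr ⟨r, hr, (h.isRootedSubtree r hr).root_mem⟩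

theorem update_insert (h : IsRootedForest G R B) {r a b : V} (ha : a ∈ B r) (hb : b ∉ R.biUnion B)
    (hab : G.Adj a b) : IsRootedForest G R (Function.update B r (insert b (B r))) := by
  have hbB : ∀ s ∈ R, b ∉ B s := by simpa using hb
  refine ⟨fun s hs => ?_, fun s hs s' hs' hne => ?_⟩
  · rcases eq_or_ne s r with rfl | hsr
    · simpa using (h.isRootedSubtree s hs).insert ha (hbB s hs) hab
    · simpa [hsr] using h.isRootedSubtree s hs
  · have hdisj := h.pairwiseDisjoint hs hs' hne
    rw [Function.onFun, Function.update_apply, Function.update_apply]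
    split_ifs with hsr hsr' hsr'
    · exact absurd (hsr.trans hsr'.symm) hne
    · subst hsr
      exact Finset.disjoint_insert_left.mpr ⟨hbB s' hs', hdisj⟩
    · subst hsr'
      exact Finset.disjoint_insert_right.mpr ⟨hbB s hs, hdisj⟩
    · exact hdisj

theorem exists_biUnion_ssubset (h : IsRootedForest G R B) (hG : G.Connected) (hR : R.Nonempty)
    {u : V} (hu : u ∉ R.biUnion B) :
    ∃ B', IsRootedForest G R B' ∧ R.biUnion B ⊂ R.biUnion B' := by
  obtain ⟨r₀, hr₀⟩ := hR
  obtain ⟨p⟩ := hG.preconnected r₀ u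
  obtain ⟨⟨⟨a, b⟩, hab⟩, -, ha, hb⟩ := p.exists_boundary_dart (R.biUnion B : Set V)
    (Finset.mem_coe.mpr (h.subset_biUnion hr₀)) hu
  obtain ⟨r, hr, har⟩ := Finset.mem_biUnion.mp (Finset.mem_coe.mp ha)
  refine ⟨_, h.update_insert har hb hab, Finset.ssubset_iff_of_subset ?_ |>.mpr ⟨b, ?_, hb⟩⟩
  · refine Finset.biUnion_mono fun s _ => ?_
    rcases eq_or_ne s r with rfl | hsr
    · simp
    · simp [hsr]
  · exact Finset.mem_biUnion.mpr ⟨r, hr, by simp⟩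

end IsRootedForest

variable [Fintype V]

theorem exists_isRootedForest_biUnion_eq_univ (hG : G.Connected) {R : Finset V}
    (hR : R.Nonempty) : ∃ B, IsRootedForest G R B ∧ R.biUnion B = Finset.univ := by
  obtain ⟨B, hB, hmax⟩ := Set.exists_max_image {B | IsRootedForest G R B}
    (fun B => (R.biUnion B).card) (Set.toFinite _)
    ⟨fun r => {r}, fun r _ => .single r, fun r _ s _ hrs => by simpa using hrs⟩
  refine ⟨B, hB, Finset.eq_univ_of_forall fun u => by_contra fun hu => ?_⟩
  obtain ⟨B', hB', hlt⟩ := hB.exists_biUnion_ssubset hG hR hu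
  exact (Finset.card_lt_card hlt).not_ge (hmax B' hB')

theorem exists_branches (hG : G.Connected) (v : V) [Fintype (G.neighborSet v)] :
    ∃ B : V → Finset V, (∀ c, G.Adj v c → IsRootedSubtree G (B c) c ∧ v ∉ B c) ∧
      ∑ c ∈ G.neighborFinset v, (B c).card + 1 = Fintype.card V := by
  obtain ⟨B, ⟨hB, hdisj⟩, huniv⟩ :=
    exists_isRootedForest_biUnion_eq_univ hG (Finset.insert_nonempty v (G.neighborFinset v))
  have hmem {c : V} (hc : G.Adj v c) : c ∈ insert v (G.neighborFinset v) := by simp [hc]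
  have hv := Finset.mem_insert_self v (G.neighborFinset v)
  have hBv : B v = {v} := by
    refine (hB v hv).eq_singleton fun w hw hvw => ?_
    exact Finset.disjoint_left.mp (hdisj hv (hmem hvw) hvw.ne) hw (hB w (hmem hvw)).root_mem
  refine ⟨B, fun c hc => ⟨hB c (hmem hc), fun hvc => ?_⟩, ?_⟩
  · exact Finset.disjoint_left.mp (hdisj hv (hmem hc) hc.ne) (hB v hv).root_mem hvc
  · rw [← Finset.card_univ, ← huniv, Finset.card_biUnion hdisj,
      Finset.sum_insert (G.notMem_neighborFinset_self v), hBv, Finset.card_singleton, add_comm]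

end RootedSubtree

section BranchBound

open Real

variable {V : Type*} [Fintype V] {G : SimpleGraph V} {x : V → ℝ} {t : ℝ} {S : Finset V} {v : V}

theorem sinRatio_mul_le_of_le_sum_neighbors [DecidableEq V] [DecidableRel G.Adj]
    (hx : ∀ v, 0 < x v) (hsup : adjMat G *ᵥ x ≤ (2 * cos t) • x) (ht : 0 < t) (hS : S.Nonempty)
    (hSt : (S.card + 1) * t < π)
    (hsum : sinRatio t (S.card * t - t) * x v ≤ ∑ w ∈ G.neighborFinset v ∩ S, x w)
    {u : V} (hu : u ∉ S) (hvu : G.Adj v u) : sinRatio t (S.card * t) * x u ≤ x v := by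
  have hle : x u + ∑ w ∈ G.neighborFinset v ∩ S, x w ≤ 2 * cos t * x v := by
    calc x u + ∑ w ∈ G.neighborFinset v ∩ S, x w
        = ∑ w ∈ insert u (G.neighborFinset v ∩ S), x w := (Finset.sum_insert (by simp [hu])).symm
      _ ≤ ∑ w ∈ G.neighborFinset v, x w :=
          Finset.sum_le_sum_of_subset_of_nonneg (by simp [Finset.insert_subset_iff, hvu])
            fun w _ _ => (hx w).le
      _ ≤ 2 * cos t * x v := by
          rw [← adjMat_mulVec_apply]
          exact hsup v
  have hangle : 0 < S.card * t := mul_pos (by exact_mod_cast hS.card_pos) ht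
  have hrec : sinRatio t (S.card * t) * (2 * cos t - sinRatio t (S.card * t - t)) = 1 :=
    sinRatio_mul_two_mul_cos_sub (sin_pos_of_pos_of_lt_pi hangle (by linarith)).ne'
      (sin_pos_of_pos_of_lt_pi (by linarith) (by linarith)).ne'
  calc sinRatio t (S.card * t) * x u
      ≤ sinRatio t (S.card * t) * ((2 * cos t - sinRatio t (S.card * t - t)) * x v) :=
        mul_le_mul_of_nonneg_left (by linarith) (sinRatio_pos hangle ht (by linarith)).le
    _ = x v := by rw [← mul_assoc, hrec, one_mul]

theorem IsRootedSubtree.sinRatio_mul_le_sum_neighbors [DecidableEq V] [DecidableRel G.Adj]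
    (h : IsRootedSubtree G S v) (hx : ∀ v, 0 < x v)
    (hsup : adjMat G *ᵥ x ≤ (2 * cos t) • x) (ht : 0 < t) (hSt : (S.card + 1) * t ≤ π) :
    sinRatio t (S.card * t - t) * x v ≤ ∑ w ∈ G.neighborFinset v ∩ S, x w := by
  induction h with
  | single v => simp [sinRatio_zero]
  | @hang A B v c hA hB hAB hvc ihA ihB =>
    have hvB : v ∉ B := Finset.disjoint_left.mp hAB hA.root_mem
    have hA1 : (1 : ℝ) ≤ A.card := by exact_mod_cast Finset.card_pos.mpr ⟨v, hA.root_mem⟩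
    have hB1 : (1 : ℝ) ≤ B.card := by exact_mod_cast Finset.card_pos.mpr ⟨c, hB.root_mem⟩
    rw [Finset.card_union_of_disjoint hAB, Nat.cast_add] at hSt ⊢
    have hc : sinRatio t (B.card * t) * x v ≤ x c :=
      sinRatio_mul_le_of_le_sum_neighbors hx hsup ht ⟨c, hB.root_mem⟩ (by nlinarith)
        (ihB (by nlinarith)) hvB hvc.symm
    calc sinRatio t ((A.card + B.card) * t - t) * x v
        = sinRatio t ((A.card * t - t) + B.card * t) * x v := by ring_nf
      _ ≤ (sinRatio t (A.card * t - t) + sinRatio t (B.card * t)) * x v :=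
          mul_le_mul_of_nonneg_right
            (sinRatio_add_le (by nlinarith) (by positivity) ht (by linarith)) (hx v).le
      _ ≤ ∑ w ∈ G.neighborFinset v ∩ A, x w + x c := by
          rw [add_mul]
          exact add_le_add (ihA (by nlinarith)) hc
      _ ≤ ∑ w ∈ G.neighborFinset v ∩ A, x w + ∑ w ∈ G.neighborFinset v ∩ B, x w := by
          gcongr
          exact Finset.single_le_sum (fun w _ => (hx w).le) (by simp [hvc, hB.root_mem])
      _ = ∑ w ∈ G.neighborFinset v ∩ (A ∪ B), x w := by
          rw [Finset.inter_union_distrib_left, Finset.sum_union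
            (hAB.mono Finset.inter_subset_right Finset.inter_subset_right)]

theorem exists_branch_angles [DecidableRel G.Adj] (hG : G.Connected) (hx : ∀ v, 0 < x v)
    (hsup : adjMat G *ᵥ x ≤ (2 * cos t) • x) (ht : 0 < t) (hVt : (Fintype.card V + 1) * t = π)
    (v : V) :
    ∃ a : V → ℝ, (∀ c ∈ G.neighborFinset v, 0 < a c) ∧
      ∑ c ∈ G.neighborFinset v, a c + 2 * t = π ∧
      (∑ c ∈ G.neighborFinset v, sinRatio t (a c)) * x v ≤ (adjMat G *ᵥ x) v := by
  classical
  obtain ⟨B, hB, hcard⟩ := exists_branches hG v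
  simp only [← mem_neighborFinset] at hB
  refine ⟨fun c => (B c).card * t, fun c hc => ?_, ?_, ?_⟩
  · exact mul_pos (by exact_mod_cast Finset.card_pos.mpr ⟨c, (hB c hc).1.root_mem⟩) ht
  · rw [← Finset.sum_mul, ← Nat.cast_sum, ← hVt, ← hcard]
    push_cast
    ring
  · rw [adjMat_mulVec_apply, Finset.sum_mul]
    refine Finset.sum_le_sum fun c hc => ?_
    obtain ⟨hBc, hvB⟩ := hB c hc
    have hlt : (B c).card + 1 ≤ Fintype.card V := by
      rw [← Finset.card_insert_of_notMem hvB]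
      exact Finset.card_le_univ _
    have hltR : ((B c).card : ℝ) + 1 ≤ Fintype.card V := by exact_mod_cast hlt
    exact sinRatio_mul_le_of_le_sum_neighbors hx hsup ht ⟨c, hBc.root_mem⟩ (by nlinarith)
      (hBc.sinRatio_mul_le_sum_neighbors hx hsup ht (by nlinarith)) hvB
      ((mem_neighborFinset ..).mp hc).symm

theorem two_mul_cos_smul_le_adjMat_mulVec (hG : G.Connected) (hx : ∀ v, 0 < x v)
    (hsup : adjMat G *ᵥ x ≤ (2 * cos t) • x) (ht : 0 < t) (hVt : (Fintype.card V + 1) * t = π) :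
    (2 * cos t) • x ≤ adjMat G *ᵥ x := by
  classical
  intro v
  obtain ⟨a, ha, hsum, hle⟩ := exists_branch_angles hG hx hsup ht hVt v
  refine le_trans (mul_le_mul_of_nonneg_right ?_ (hx v).le) hle
  have ha' := fun c hc => (ha c hc).le
  rw [two_mul_cos_eq_sinRatio_sum ha' ht hsum]
  exact sinRatio_sum_le ha' ht hsum.le

theorem two_mul_cos_mul_lt_adjMat_mulVec [DecidableRel G.Adj] (hG : G.Connected)
    (hx : ∀ v, 0 < x v) (hsup : adjMat G *ᵥ x ≤ (2 * cos t) • x) (ht : 0 < t)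
    (hVt : (Fintype.card V + 1) * t = π) (hv : 2 < G.degree v) :
    2 * cos t * x v < (adjMat G *ᵥ x) v := by
  obtain ⟨a, ha, hsum, hle⟩ := exists_branch_angles hG hx hsup ht hVt v
  refine lt_of_lt_of_le (mul_lt_mul_of_pos_right ?_ (hx v)) hle
  rw [two_mul_cos_eq_sinRatio_sum (fun c hc => (ha c hc).le) ht hsum]
  exact sinRatio_sum_lt ha ht hsum.le hv

end BranchBound

section PathMinimality

open Real

variable {V : Type*} [Fintype V] [DecidableEq V] {G : SimpleGraph V}

theorem two_mul_cos_le_specRad (hG : G.Connected) :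
    2 * cos (π / (Fintype.card V + 1)) ≤ specRad G := by
  obtain ⟨x, hx, hAx⟩ := exists_pos_adjMat_mulVec_eq_specRad_smul hG
  have := hG.nonempty
  by_contra! hlt
  refine hlt.not_ge (le_specRad_of_smul_le_adjMat_mulVec hG (lt_of_strongLT hx) ?_)
  refine two_mul_cos_smul_le_adjMat_mulVec hG hx ?_ (by positivity) (by field_simp)
  rw [hAx]
  exact smul_le_smul_of_nonneg_right hlt.le fun v => (hx v).le

theorem degree_le_two_of_specRad_eq_two_mul_cos [DecidableRel G.Adj] (hG : G.Connected)
    (h : specRad G = 2 * cos (π / (Fintype.card V + 1))) (v : V) : G.degree v ≤ 2 := by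
  obtain ⟨x, hx, hAx⟩ := exists_pos_adjMat_mulVec_eq_specRad_smul hG
  rw [h] at hAx
  by_contra! hv
  refine (two_mul_cos_mul_lt_adjMat_mulVec hG hx hAx.le (by positivity) (by field_simp) hv).ne ?_
  rw [hAx, Pi.smul_apply, smul_eq_mul]

theorem specRad_pathGraph_le_specRad (hG : G.Connected) :
    specRad (pathGraph (Fintype.card V)) ≤ specRad G := by
  have := hG.nonempty
  rw [specRad_pathGraph Fintype.card_pos]
  exact two_mul_cos_le_specRad hG

theorem nonempty_iso_pathGraph_of_specRad_eq (hG : G.Connected)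
    (h : specRad G = specRad (pathGraph (Fintype.card V))) :
    Nonempty (G ≃g pathGraph (Fintype.card V)) := by
  classical
  have := hG.nonempty
  rw [specRad_pathGraph Fintype.card_pos] at h
  have hlt : specRad G < 2 := by
    have hcos : cos (π / (Fintype.card V + 1)) < 1 := by
      have hpos : 0 < π / (Fintype.card V + 1) := by positivity
      simpa only [cos_zero] using
        cos_lt_cos_of_nonneg_of_le_pi le_rfl (div_le_self pi_nonneg (by simp)) hpos
    linarith
  obtain ⟨r, hr⟩ := exists_degree_le_one_of_specRad_lt_two hG hlt
  exact nonempty_iso_pathGraph_of_dist_injective hG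
    (dist_injective_of_degree_le_two hG (degree_le_two_of_specRad_eq_two_mul_cos hG h) hr)

end PathMinimality

section Domination

variable {V : Type*} {G G' : SimpleGraph V} {D : Finset V} {d w : V}

theorem IsDomSet.mono (h : IsDomSet G D) (hle : G ≤ G') : IsDomSet G' D := fun v hv =>
  (h v hv).imp fun _ hu => ⟨hu.1, hle hu.2⟩

/-- `w` is an external private neighbour of `d ∈ D` with respect to `D`: it lies outside `D`, and
`d` is its only neighbour in `D`. -/
def IsExtPrivateNbr (G : SimpleGraph V) (D : Finset V) (d w : V) : Prop :=
  w ∉ D ∧ ∀ u ∈ D, G.Adj u w ↔ u = d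

theorem exists_adj_ne_of_not_isExtPrivateNbr (h : ¬IsExtPrivateNbr G D d w) (hw : w ∉ D)
    (hdw : G.Adj d w) : ∃ u ∈ D, u ≠ d ∧ G.Adj u w := by
  by_contra! hu
  refine h ⟨hw, fun u huD => ⟨fun huw => ?_, fun hud => hud ▸ hdw⟩⟩
  exact by_contra fun hne => hu u huD hne huw

theorem IsDomSet.insert_erase [DecidableEq V] (h : IsDomSet G D)
    (hd : ∀ w, ¬IsExtPrivateNbr G D d w) (hdw : G.Adj d w) :
    IsDomSet G (insert w (D.erase d)) := by
  intro v hv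
  rw [Finset.mem_insert, Finset.mem_erase, not_or, not_and'] at hv
  rcases eq_or_ne v d with rfl | hvd
  · exact ⟨w, Finset.mem_insert_self .., hdw.symm⟩
  · have hvD : v ∉ D := fun hvD => hv.2 hvD hvd
    obtain ⟨u, huD, huv⟩ := h v hvD
    obtain ⟨u', hu'D, hu'd, hu'v⟩ : ∃ u ∈ D, u ≠ d ∧ G.Adj u v := by
      rcases eq_or_ne u d with rfl | hud
      · exact exists_adj_ne_of_not_isExtPrivateNbr (hd v) hvD huv
      · exact ⟨u, huD, hud, huv⟩
    exact ⟨u', Finset.mem_insert_of_mem (Finset.mem_erase.mpr ⟨hu'd, hu'D⟩), hu'v⟩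

variable [Fintype V]

theorem IsDomSet.domNum_le (h : IsDomSet G D) : domNum G ≤ D.card := Nat.sInf_le ⟨D, h, rfl⟩

theorem exists_isDomSet_card_eq_domNum (G : SimpleGraph V) :
    ∃ D, IsDomSet G D ∧ D.card = domNum G :=
  Nat.sInf_mem (s := {k | ∃ D : Finset V, IsDomSet G D ∧ D.card = k})
    ⟨_, Finset.univ, fun v hv => absurd (Finset.mem_univ v) hv, rfl⟩

theorem domNum_anti (hle : G ≤ G') : domNum G' ≤ domNum G := by
  obtain ⟨D, hD, hcard⟩ := exists_isDomSet_card_eq_domNum G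
  exact hcard ▸ (hD.mono hle).domNum_le

theorem IsDomSet.not_adj_of_card_eq_domNum (h : IsDomSet G D) (hD : D.card = domNum G)
    (hdD : d ∈ D) (hd : ∀ w, ¬IsExtPrivateNbr G D d w) (hwD : w ∈ D) : ¬G.Adj d w := by
  classical
  intro hdw
  have hle := (h.insert_erase hd hdw).domNum_le
  rw [Finset.insert_eq_of_mem (Finset.mem_erase.mpr ⟨hdw.ne', hwD⟩), ← hD] at hle
  exact (Finset.card_erase_lt_of_mem hdD).not_ge hle

-- Exchanging a vertex without private neighbour for a neighbour adds edges inside the set.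
theorem IsDomSet.exists_card_interedges_lt [DecidableRel G.Adj] (h : IsDomSet G D)
    (hD : D.card = domNum G) (hdD : d ∈ D) (hd : ∀ w, ¬IsExtPrivateNbr G D d w)
    (hdw : G.Adj d w) :
    ∃ D', IsDomSet G D' ∧ D'.card = domNum G ∧
      (G.interedges D D).card < (G.interedges D' D').card := by
  classical
  have hnot {u : V} (hu : u ∈ D) : ¬G.Adj d u := h.not_adj_of_card_eq_domNum hD hdD hd hu
  have hwD : w ∉ D := fun hw => hnot hw hdw
  obtain ⟨u, huD, hud, huw⟩ := exists_adj_ne_of_not_isExtPrivateNbr (hd w) hwD hdw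
  refine ⟨insert w (D.erase d), h.insert_erase hd hdw, ?_, Finset.card_lt_card ?_⟩
  · rw [Finset.card_insert_of_notMem fun hw => hwD (Finset.mem_of_mem_erase hw),
      Finset.card_erase_add_one hdD, hD]
  · refine Finset.ssubset_iff_of_subset ?_ |>.mpr ⟨(u, w), ?_, ?_⟩
    · rintro ⟨p, q⟩ hpq
      obtain ⟨hp, hq, hadj⟩ := Rel.mk_mem_interedges_iff.mp hpq
      have hpd : p ≠ d := fun hpd => hnot hq (hpd ▸ hadj)
      have hqd : q ≠ d := fun hqd => hnot hp (hqd ▸ hadj.symm)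
      simp [interedges, Rel.mk_mem_interedges_iff, *]
    · simp [interedges, Rel.mk_mem_interedges_iff, *]
    · simp [interedges, Rel.mk_mem_interedges_iff, hwD]

/-- The theorem of Bollobás and Cockayne. -/
theorem exists_isDomSet_forall_exists_isExtPrivateNbr (hG : ∀ v, ∃ w, G.Adj v w) :
    ∃ D, IsDomSet G D ∧ D.card = domNum G ∧ ∀ d ∈ D, ∃ w, IsExtPrivateNbr G D d w := by
  classical
  obtain ⟨D, ⟨hD, hcard⟩, hmax⟩ := Set.exists_max_image
    {D | IsDomSet G D ∧ D.card = domNum G} (fun D => (G.interedges D D).card) (Set.toFinite _)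
    (exists_isDomSet_card_eq_domNum G)
  refine ⟨D, hD, hcard, fun d hdD => ?_⟩
  by_contra! hd
  obtain ⟨w, hdw⟩ := hG d
  obtain ⟨D', hD', hcard', hlt⟩ := hD.exists_card_interedges_lt hcard hdD hd hdw
  exact hlt.not_ge (hmax D' ⟨hD', hcard'⟩)

end Domination

section PrivatePairing

variable {V W : Type*} {G : SimpleGraph V} {a b : W → V}

/-- The vertices of `G` are listed without repetition as `a i` and `b i`, and the only edges between
the two lists join `a i` to `b i`.  Such a pairing arises from a minimum dominating set `a` and
its private neighbours `b` when the domination number is half the number of vertices. -/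
structure IsPrivatePairing (G : SimpleGraph V) (a b : W → V) : Prop where
  bijective : Function.Bijective (Sum.elim a b)
  adj_iff : ∀ i j, G.Adj (a i) (b j) ↔ i = j

theorem exists_isPrivatePairing [Fintype V] (hG : ∀ v, ∃ w, G.Adj v w)
    (hcard : Fintype.card V ≤ 2 * domNum G) :
    ∃ (D : Finset V) (a b : D → V), D.card = domNum G ∧ IsPrivatePairing G a b := by
  obtain ⟨D, -, hD, hpriv⟩ := exists_isDomSet_forall_exists_isExtPrivateNbr hG
  choose! b hbD hb using hpriv
  have hadj (i j : D) : G.Adj i (b j) ↔ i = j := by rw [hb j j.2 i i.2, Subtype.ext_iff]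
  have hinj : Function.Injective (Sum.elim ((↑) : D → V) fun i : D => b i) := by
    refine Subtype.val_injective.sumElim (fun i j hij => ?_) fun i j hij => hbD j j.2 (hij ▸ i.2)
    exact (hadj i j).mp (hij ▸ (hadj i i).mpr rfl)
  refine ⟨D, (↑), fun i => b i, hD, ⟨hinj.bijective_of_nat_card_le ?_, hadj⟩⟩
  simpa [hD, ← two_mul] using hcard

namespace IsPrivatePairing

theorem symm (h : IsPrivatePairing G a b) : IsPrivatePairing G b a where
  bijective := by
    convert h.bijective.comp (Equiv.sumComm W W).bijective using 1
    ext (i | i) <;> rfl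
  adj_iff i j := by rw [adj_comm, h.adj_iff, eq_comm]

theorem adj_right_iff (h : IsPrivatePairing G a b) {i : W} (hi : ∀ j, ¬G.Adj (b i) (b j)) (v : V) :
    G.Adj (b i) v ↔ v = a i := by
  obtain ⟨j | j, rfl⟩ := h.bijective.surjective v
  · simp only [Sum.elim_inl, adj_comm G (b i), h.adj_iff]
    exact (h.bijective.injective.comp Sum.inl_injective).eq_iff.symm
  · simp only [Sum.elim_inr, hi, false_iff]
    exact fun hij => Sum.inr_ne_inl (h.bijective.injective (a₁ := .inr j) (a₂ := .inl i) hij)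

theorem eq_of_adj_of_adj [Fintype V] [Fintype W] (h : IsPrivatePairing G a b)
    (hcard : Fintype.card W ≤ domNum G) {i j k : W} (hij : G.Adj (a i) (a j))
    (hik : G.Adj (b i) (b k)) : j = k := by
  classical
  by_contra hjk
  have hki : k ≠ i := fun hki => hik.ne (hki ▸ rfl)
  have hji : j ≠ i := fun hji => hij.ne (hji ▸ rfl)
  have hdom : IsDomSet G (insert (b k) (({i, k} : Finset W)ᶜ.image a)) := by
    intro v hv
    simp only [Finset.mem_insert, Finset.mem_image, Finset.mem_compl, Finset.mem_singleton] at hv ⊢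
    obtain ⟨x | x, rfl⟩ := h.bijective.surjective v <;>
      simp only [Sum.elim_inl, Sum.elim_inr] at hv ⊢
    · obtain rfl | rfl : x = i ∨ x = k := by grind
      · exact ⟨a j, .inr ⟨j, by grind, rfl⟩, hij.symm⟩
      · exact ⟨b x, .inl rfl, ((h.adj_iff x x).mpr rfl).symm⟩
    · rcases eq_or_ne x i with rfl | hxi
      · exact ⟨b k, .inl rfl, hik.symm⟩
      · exact ⟨a x, .inr ⟨x, by grind, rfl⟩, (h.adj_iff x x).mpr rfl⟩
  have hlt : (insert (b k) (({i, k} : Finset W)ᶜ.image a)).card < Fintype.card W := by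
    have hpair := Finset.card_pair hki.symm
    have hcompl := Finset.card_add_card_compl ({i, k} : Finset W)
    have himage := Finset.card_image_le (s := ({i, k} : Finset W)ᶜ) (f := a)
    have hinsert := Finset.card_insert_le (b k) (({i, k} : Finset W)ᶜ.image a)
    lia
  exact (hcard.trans hdom.domNum_le).not_gt hlt

end IsPrivatePairing

theorem eq_of_isAcyclic_of_adj (hG : G.IsAcyclic) {u v x y : V} (huv : u ≠ v) (hux : G.Adj u x)
    (hxv : G.Adj x v) (huy : G.Adj u y) (hyv : G.Adj y v) : x = y := by
  have hpath {z : V} (huz : G.Adj u z) (hzv : G.Adj z v) :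
      (Walk.cons huz (.cons hzv .nil)).IsPath := by
    simp [Walk.cons_isPath_iff, huz.ne, hzv.ne, huv]
  have heq := (hG.subsingleton_path u v).elim ⟨_, hpath hux hxv⟩ ⟨_, hpath huy hyv⟩
  simpa using congrArg (fun p : G.Path u v => p.1.snd) heq

theorem exists_nonempty_iso_corona_of_isAcyclic [Fintype V] (hG : G.IsAcyclic)
    (hnbr : ∀ v, ∃ w, G.Adj v w) (hcard : Fintype.card V ≤ 2 * domNum G) :
    ∃ (D : Finset V) (H : SimpleGraph D), Nonempty (G ≃g corona H) := by
  obtain ⟨D, a, b, hD, hab⟩ := exists_isPrivatePairing hnbr hcard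
  have hDcard : Fintype.card D ≤ domNum G := (Fintype.card_coe D).trans_le hD.le
  have hleaf (i : D) : (∀ j, ¬G.Adj (a i) (a j)) ∨ ∀ j, ¬G.Adj (b i) (b j) := by
    by_contra! h
    obtain ⟨⟨j, hij⟩, k, hik⟩ := h
    obtain rfl := hab.eq_of_adj_of_adj hDcard hij hik
    have hne : a i ≠ b j := fun h => Sum.inl_ne_inr (hab.bijective.injective h)
    have heq := eq_of_isAcyclic_of_adj hG hne hij ((hab.adj_iff j j).mpr rfl)
      ((hab.adj_iff i i).mpr rfl) hik
    exact Sum.inl_ne_inr (hab.bijective.injective (a₁ := .inl j) (a₂ := .inr i) heq)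
  have hcore (i : D) : ∃ c l, (a i = c ∧ b i = l ∨ a i = l ∧ b i = c) ∧
      ∀ v, G.Adj l v ↔ v = c := by
    rcases hleaf i with ha | hb
    · exact ⟨b i, a i, .inr ⟨rfl, rfl⟩, hab.symm.adj_right_iff ha⟩
    · exact ⟨a i, b i, .inl ⟨rfl, rfl⟩, hab.adj_right_iff hb⟩
  choose c l hcl hadj using hcore
  have hsurj : Function.Surjective (Sum.elim c l) := by
    intro v
    obtain ⟨i | i, rfl⟩ := hab.bijective.surjective v <;> rcases hcl i with ⟨h, h'⟩ | ⟨h, h'⟩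
    exacts [⟨.inl i, h.symm⟩, ⟨.inr i, h.symm⟩, ⟨.inr i, h'.symm⟩, ⟨.inl i, h'.symm⟩]
  have hbij := hsurj.bijective_of_nat_card_le (Nat.card_congr (.ofBijective _ hab.bijective)).le
  exact ⟨D, _, nonempty_iso_corona hbij hadj⟩

theorem exists_connected_iso_corona [Fintype V] (hG : G.Connected)
    (hcard : Fintype.card V = 2 * domNum G) :
    ∃ T ≤ G, T.Connected ∧ ∃ (D : Finset V) (H : SimpleGraph D),
      D.card = domNum G ∧ H.Connected ∧ Nonempty (T ≃g corona H) := by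
  obtain ⟨T, hTG, hT⟩ := hG.exists_isTree_le
  have hle : Fintype.card V ≤ 2 * domNum T := by
    rw [hcard]
    exact Nat.mul_le_mul_left 2 (domNum_anti hTG)
  have := hG.nonempty
  have hpos : 0 < Fintype.card V := Fintype.card_pos
  have : Nontrivial V := Fintype.one_lt_card_iff_nontrivial.mp (by lia)
  obtain ⟨D, H, ⟨e⟩⟩ := exists_nonempty_iso_corona_of_isAcyclic hT.isAcyclic
    hT.connected.preconnected.exists_adj_of_nontrivial hle
  have hD := Fintype.card_congr e.toEquiv
  rw [Fintype.card_sum, Fintype.card_coe] at hD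
  have hH : H.Connected := corona_connected_iff.mp (e.connected_iff.mp hT.connected)
  exact ⟨T, hTG, hT.connected, D, H, by lia, hH, ⟨e⟩⟩

end PrivatePairing

section CoronaMinimality

variable {W : Type*} [Fintype W] [DecidableEq W] {H : SimpleGraph W}

theorem specRad_corona_pathGraph_le (hH : H.Connected) :
    specRad (corona (pathGraph (Fintype.card W))) ≤ specRad (corona H) :=
  have := hH.nonempty
  (specRad_corona_le_iff pathGraph_card_connected hH).mpr (specRad_pathGraph_le_specRad hH)

theorem nonempty_iso_corona_pathGraph_of_specRad_eq (hH : H.Connected)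
    (h : specRad (corona H) = specRad (corona (pathGraph (Fintype.card W)))) :
    Nonempty (corona H ≃g corona (pathGraph (Fintype.card W))) :=
  have := hH.nonempty
  (nonempty_iso_pathGraph_of_specRad_eq hH
    ((specRad_corona_inj hH pathGraph_card_connected).mp h)).map coronaCongr

end CoronaMinimality

theorem domNum_half_min_specRad_general {V : Type*} [Fintype V] [DecidableEq V] {G : SimpleGraph V}
    (hG : G.Connected) (hcard : Fintype.card V = 2 * domNum G) :
    specRad (corona (pathGraph (domNum G))) ≤ specRad G ∧
    (specRad G = specRad (corona (pathGraph (domNum G))) ↔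
      Nonempty (G ≃g corona (pathGraph (domNum G)))) := by
  obtain ⟨T, hTG, hT, D, H, hD, hH, ⟨e⟩⟩ := exists_connected_iso_corona hG hcard
  rw [← hD, ← Fintype.card_coe]
  have hcorona := specRad_corona_pathGraph_le hH
  have hTH := specRad_congr e
  have hle := specRad_mono hT hTG
  refine ⟨hcorona.trans (hTH.symm.trans_le hle), fun heq => ?_, fun ⟨i⟩ => specRad_congr i⟩
  have hHP := (hTH.symm.trans_le (hle.trans_eq heq)).antisymm hcorona
  obtain rfl := eq_of_le_of_specRad_eq hT hTG (hTH.trans (hHP.trans heq.symm))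
  exact (nonempty_iso_corona_pathGraph_of_specRad_eq hH hHP).map e.trans

theorem domNum_half_min_specRad (n : ℕ) (hn : 2 ≤ n) (heven : Even n)
    (G : SimpleGraph (Fin n)) (hconn : G.Connected) (hdom : domNum G = n / 2) :
    specRad (corona (SimpleGraph.pathGraph (n / 2))) ≤ specRad G ∧
    (specRad G = specRad (corona (SimpleGraph.pathGraph (n / 2))) ↔
      Nonempty (G ≃g corona (SimpleGraph.pathGraph (n / 2)))) := by
  exact hdom ▸ domNum_half_min_specRad_general hconn
    (by rw [hdom, Fintype.card_fin, Nat.two_mul_div_two_of_even heven])
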